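/- There exists an injective group homomorphism φ : 𝒫 → 𝒫₀ with φ(u) = u₁u₂ and φ(o) = o₁o₂; that is, the group 𝒫 = ⟨u, o | u o u⁻¹ = o^r⟩ embeds into 𝒫₀. -/

import Mathlib

/-- The generators `o₁, …, o_r, u₁, …, u₅` of the group `𝒫₀`. -/
inductive P0Gen (r : ℕ) : Type
  | o : Fin r → P0Gen r
  | u : Fin 5 → P0Gen r

/-- The free-group letter `o_k` (`1 ≤ k ≤ r`; junk value `1` out of range). -/
def oW (r : ℕ) (k : ℕ) : FreeGroup (P0Gen r) :=
  if h : 1 ≤ k ∧ k ≤ r then FreeGroup.of (P0Gen.o ⟨k - 1, by omega⟩) else 1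

/-- The free-group letter `u_k` (`1 ≤ k ≤ 5`; junk value `1` out of range). -/
def uW (r : ℕ) (k : ℕ) : FreeGroup (P0Gen r) :=
  if h : 1 ≤ k ∧ k ≤ 5 then FreeGroup.of (P0Gen.u ⟨k - 1, by omega⟩) else 1

/-- The relations `s² = e` for every generator `s` of `𝒫₀`. -/
def P0RelsSq (r : ℕ) : Set (FreeGroup (P0Gen r)) :=
  Set.range fun g : P0Gen r => FreeGroup.of g * FreeGroup.of g

/-- The relations `u₃ = u₂o₁u₂`, `u₄ = u₂o₂u₂`, `u₅ = u₁u₃u₁`, `o₂ = u₁u₄u₁`,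
`u₅ = o₁o_r o₁` of `𝒫₀`. -/
def P0RelsU (r : ℕ) : Set (FreeGroup (P0Gen r)) :=
  { uW r 2 * oW r 1 * uW r 2 * (uW r 3)⁻¹,
    uW r 2 * oW r 2 * uW r 2 * (uW r 4)⁻¹,
    uW r 1 * uW r 3 * uW r 1 * (uW r 5)⁻¹,
    uW r 1 * uW r 4 * uW r 1 * (oW r 2)⁻¹,
    oW r 1 * oW r r * oW r 1 * (uW r 5)⁻¹ }

/-- The remaining conjugacy relations of `𝒫₀`: if `r` is even, `o_{1+2j} = o₁o_{2j}o₁` and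
`o_{2+2j} = o₂o_{1+2j}o₂` for `j = 1, …, r/2 − 1`; if `r` is odd, `o₃ = o₂o₁o₂` together
with `o_{2+2j} = o₁o_{1+2j}o₁` and `o_{3+2j} = o₂o_{2+2j}o₂` for `j = 1, …, (r−3)/2`. -/
def P0RelsO (r : ℕ) : Set (FreeGroup (P0Gen r)) :=
  if Even r then
    ⋃ j ∈ Finset.Icc 1 (r / 2 - 1),
      ({oW r 1 * oW r (2 * j) * oW r 1 * (oW r (1 + 2 * j))⁻¹,
        oW r 2 * oW r (1 + 2 * j) * oW r 2 * (oW r (2 + 2 * j))⁻¹} :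
          Set (FreeGroup (P0Gen r)))
  else
    {oW r 2 * oW r 1 * oW r 2 * (oW r 3)⁻¹} ∪
    ⋃ j ∈ Finset.Icc 1 ((r - 3) / 2),
      ({oW r 1 * oW r (1 + 2 * j) * oW r 1 * (oW r (2 + 2 * j))⁻¹,
        oW r 2 * oW r (2 + 2 * j) * oW r 2 * (oW r (3 + 2 * j))⁻¹} :
          Set (FreeGroup (P0Gen r)))

/-- All defining relations of `𝒫₀`. -/
def P0Rels (r : ℕ) : Set (FreeGroup (P0Gen r)) := P0RelsSq r ∪ P0RelsU r ∪ P0RelsO r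

/-- The group `𝒫₀`, presented by the above generators and relations. -/
abbrev P0 (r : ℕ) : Type := PresentedGroup (P0Rels r)

/-- The generators `u`, `o` of the group `𝒫 = ⟨u, o | u o u⁻¹ = o^r⟩`. -/
inductive PGen : Type
  | u : PGen
  | o : PGen

/-- The single relation `u o u⁻¹ o^{-r}` of `𝒫`. -/
def PRels (r : ℕ) : Set (FreeGroup PGen) :=
  {FreeGroup.of PGen.u * FreeGroup.of PGen.o * (FreeGroup.of PGen.u)⁻¹ *
    (FreeGroup.of PGen.o ^ r)⁻¹}

/-- The group `𝒫 = ⟨u, o | u o u⁻¹ = o^r⟩`. -/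
abbrev Pgrp (r : ℕ) : Type := PresentedGroup (PRels r)

/-!
In a group where `u o u⁻¹ = o^r` with `|r| ≥ 2`, an equality `u ^ a = o ^ n * u ^ b` with `o` of
infinite order is trivial, because both sides conjugate `o`, to `o ^ r ^ a` and `o ^ r ^ b`
respectively. As every element of `𝒫` has the form `u⁻ᵃ oⁿ uᵇ`, a homomorphism out of `𝒫` is
injective as soon as the image of `o` has infinite order.

In `𝒫₀` the relations between the `o_k` yield `o₁ o_r = (o₁o₂)^(r-1)`, while conjugation by `u₁u₂`
maps `o₁` to `o₁ o_r o₁` and fixes `o₂`, so `u₁u₂` and `o₁o₂` satisfy the relation of `𝒫`.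
Finally `𝒫₀` acts on `ℚ × ℚ`: every `o_k` reflects the first coordinate in a half-integer point,
while `u₁` and `u₂` exchange the coordinates, `u₁` rescaling them by `r` and `r⁻¹`. There `o₁o₂` is
a nontrivial translation.
-/

section BaumslagSolitar

variable {G H : Type*} [Group G] [Group H] {u o : G} {r : ℤ}

theorem semiconjBy_pow_zpow (h : SemiconjBy u o (o ^ r)) (c : ℕ) (n : ℤ) :
    SemiconjBy (u ^ c) (o ^ n) (o ^ (n * r ^ c)) := by
  induction c with
  | zero => simp
  | succ c ih =>
    have hstep := h.zpow_right (n * r ^ c)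
    rw [← zpow_mul, show r * (n * r ^ c) = n * r ^ (c + 1) by ring] at hstep
    rw [pow_succ']
    exact hstep.mul_left ih

theorem exists_pow_mul_eq_zpow_mul_pow (h : SemiconjBy u o (o ^ r)) {g : G}
    (hg : g ∈ Subgroup.closure {u, o}) :
    ∃ (a b : ℕ) (n : ℤ), u ^ a * g = o ^ n * u ^ b := by
  induction hg using Subgroup.closure_induction with
  | mem x hx =>
    rcases hx with rfl | rfl
    · exact ⟨0, 1, 0, by simp⟩
    · exact ⟨0, 0, 1, by simp⟩
  | one => exact ⟨0, 0, 0, by simp⟩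
  | mul x y _ _ hx hy =>
    obtain ⟨a, b, n, hx⟩ := hx
    obtain ⟨c, d, m, hy⟩ := hy
    refine ⟨c + a, b + d, n * r ^ c + m * r ^ b, ?_⟩
    calc u ^ (c + a) * (x * y) = u ^ c * (u ^ a * x) * y := by simp only [pow_add, mul_assoc]
      _ = u ^ c * o ^ n * u ^ b * y := by rw [hx]; simp only [mul_assoc]
      _ = o ^ (n * r ^ c) * u ^ b * (u ^ c * y) := by
        rw [(semiconjBy_pow_zpow h c n).eq, mul_assoc _ (u ^ c), (Commute.pow_pow_self u c b).eq]
        simp only [mul_assoc]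
      _ = o ^ (n * r ^ c) * (u ^ b * o ^ m) * u ^ d := by rw [hy]; simp only [mul_assoc]
      _ = o ^ (n * r ^ c + m * r ^ b) * u ^ (b + d) := by
        rw [(semiconjBy_pow_zpow h b m).eq]
        simp only [zpow_add, pow_add, mul_assoc]
  | inv x _ hx =>
    obtain ⟨a, b, n, hx⟩ := hx
    refine ⟨b, a, -n, ?_⟩
    rw [zpow_neg, eq_inv_mul_iff_mul_eq, ← mul_assoc, ← hx, mul_inv_cancel_right]

theorem eq_and_eq_zero_of_pow_eq_zpow_mul_pow (h : SemiconjBy u o (o ^ r)) (hr : 1 < r.natAbs)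
    (ho : ¬IsOfFinOrder o) {a b : ℕ} {n : ℤ} (hab : u ^ a = o ^ n * u ^ b) :
    a = b ∧ n = 0 := by
  have hinj := injective_zpow_iff_not_isOfFinOrder.mpr ho
  have hconj (c : ℕ) : SemiconjBy (u ^ c) o (o ^ r ^ c) := by
    simpa using semiconjBy_pow_zpow h c 1
  have hright : SemiconjBy (o ^ n * u ^ b) o (o ^ r ^ b) :=
    ((Commute.refl o).zpow_zpow n (r ^ b)).semiconjBy.mul_left (hconj b)
  have hpow : o ^ r ^ a = o ^ r ^ b := mul_right_cancel ((hconj a).eq.symm.trans (hab ▸ hright.eq))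
  obtain rfl : a = b := Int.pow_right_injective hr (hinj hpow)
  exact ⟨rfl, hinj (by simpa using hab)⟩

theorem injective_of_not_isOfFinOrder (h : SemiconjBy u o (o ^ r)) (hr : 1 < r.natAbs)
    (hgen : Subgroup.closure {u, o} = ⊤) (f : G →* H) (ho : ¬IsOfFinOrder (f o)) :
    Function.Injective f := by
  rw [injective_iff_map_eq_one]
  intro g hg
  obtain ⟨a, b, n, hnf⟩ := exists_pow_mul_eq_zpow_mul_pow h (hgen ▸ Subgroup.mem_top g)
  have himage : f u ^ a = f o ^ n * f u ^ b := by simpa [hg] using congrArg f hnf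
  have hsemi : SemiconjBy (f u) (f o) (f o ^ r) := by simpa using h.map f
  obtain ⟨rfl, rfl⟩ := eq_and_eq_zero_of_pow_eq_zpow_mul_pow hsemi hr ho himage
  simpa using hnf

end BaumslagSolitar

namespace Pgrp

variable {G : Type*} [Group G] {r : ℕ}

theorem semiconjBy_of :
    SemiconjBy (PresentedGroup.of PGen.u : Pgrp r) (PresentedGroup.of PGen.o)
      (PresentedGroup.of PGen.o ^ (r : ℤ)) := by
  rw [zpow_natCast]
  exact eq_mul_of_mul_inv_eq (PresentedGroup.mk_eq_mk_of_mul_inv_mem (rels := PRels r) rfl)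

theorem closure_of_eq_top :
    Subgroup.closure {(PresentedGroup.of PGen.u : Pgrp r), PresentedGroup.of PGen.o} = ⊤ := by
  rw [← PresentedGroup.closure_range_of (PRels r)]
  congr 1
  ext g
  constructor
  · rintro (rfl | rfl) <;> exact Set.mem_range_self _
  · rintro ⟨_ | _, rfl⟩ <;> simp

/-- The homomorphism out of `𝒫` determined by images `u` and `o` of its generators. -/
def lift (u o : G) (h : u * o * u⁻¹ = o ^ r) : Pgrp r →* G :=
  PresentedGroup.toGroup (f := fun | .u => u | .o => o) <| by
    rintro _ rfl
    simp [h]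

theorem lift_of_u (u o : G) (h : u * o * u⁻¹ = o ^ r) :
    lift u o h (PresentedGroup.of PGen.u) = u :=
  PresentedGroup.toGroup.of _

theorem lift_of_o (u o : G) (h : u * o * u⁻¹ = o ^ r) :
    lift u o h (PresentedGroup.of PGen.o) = o :=
  PresentedGroup.toGroup.of _

theorem lift_injective (hr : 2 ≤ r) {u o : G} (h : u * o * u⁻¹ = o ^ r) (ho : ¬IsOfFinOrder o) :
    Function.Injective (lift u o h) :=
  injective_of_not_isOfFinOrder semiconjBy_of (by rwa [Int.natAbs_natCast]) closure_of_eq_top _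
    (by rwa [lift_of_o])

end Pgrp

/-- The two families in `P0RelsO`, for `r` even and for `r` odd, are one family indexed by the `k`
of the same parity as `r`; for odd `r` the member at `k = 1` is shortened to `o₃ = o₂o₁o₂`. -/
theorem mem_P0RelsO_iff {r : ℕ} {w : FreeGroup (P0Gen r)} :
    w ∈ P0RelsO r ↔
      (¬Even r ∧ w = oW r 2 * oW r 1 * oW r 2 * (oW r 3)⁻¹) ∨
      ∃ k, 2 ≤ k ∧ k + 2 ≤ r ∧ (Even k ↔ Even r) ∧
        (w = oW r 1 * oW r k * oW r 1 * (oW r (k + 1))⁻¹ ∨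
          w = oW r 2 * oW r (k + 1) * oW r 2 * (oW r (k + 2))⁻¹) := by
  by_cases hr : Even r
  · simp only [P0RelsO, hr, if_true, not_true, false_and, false_or, iff_true, Set.mem_iUnion,
      Finset.mem_Icc, Set.mem_insert_iff, Set.mem_singleton_iff, exists_prop]
    constructor
    · rintro ⟨j, hj, hw⟩
      exact ⟨2 * j, by omega, by omega, even_two_mul j, by simpa only [add_comm] using hw⟩
    · rintro ⟨k, hk, hkr, ⟨j, rfl⟩, hw⟩
      refine ⟨j, by omega, ?_⟩
      simpa only [← two_mul, add_comm] using hw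
  · simp only [P0RelsO, hr, if_false, not_false_iff, true_and, iff_false, Set.mem_union,
      Set.mem_iUnion, Finset.mem_Icc, Set.mem_insert_iff, Set.mem_singleton_iff, exists_prop]
    refine or_congr_right ⟨?_, ?_⟩
    · rintro ⟨j, hj, hw⟩
      refine ⟨1 + 2 * j, by omega, by omega, by simp [parity_simps], ?_⟩
      rwa [show 1 + 2 * j + 1 = 2 + 2 * j by ring, show 1 + 2 * j + 2 = 3 + 2 * j by ring]
    · rintro ⟨k, hk, hkr, hodd, hw⟩
      obtain ⟨j, rfl⟩ := Nat.not_even_iff_odd.mp hodd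
      refine ⟨j, by rw [Nat.not_even_iff] at hr; omega, ?_⟩
      rwa [add_comm 1, show 2 + 2 * j = 2 * j + 1 + 1 by ring,
        show 3 + 2 * j = 2 * j + 1 + 2 by ring]

namespace P0

variable {r : ℕ}

/-- The element `o_k` of `𝒫₀`, which is `1` unless `1 ≤ k ≤ r`. -/
def o (r k : ℕ) : P0 r := PresentedGroup.mk (P0Rels r) (oW r k)

/-- The element `u_k` of `𝒫₀`, which is `1` unless `1 ≤ k ≤ 5`. -/
def u (r k : ℕ) : P0 r := PresentedGroup.mk (P0Rels r) (uW r k)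

theorem mk_of_mul_self (g : P0Gen r) :
    PresentedGroup.mk (P0Rels r) (FreeGroup.of g) * PresentedGroup.mk (P0Rels r) (FreeGroup.of g)
      = 1 :=
  PresentedGroup.one_of_mem (Or.inl (Or.inl ⟨g, rfl⟩))

theorem o_mul_self (k : ℕ) : o r k * o r k = 1 := by
  unfold o oW
  split_ifs
  · exact mk_of_mul_self _
  · simp

theorem u_mul_self (k : ℕ) : u r k * u r k = 1 := by
  unfold u uW
  split_ifs
  · exact mk_of_mul_self _
  · simp

theorem mk_eq_mk_of_mem_P0RelsU {x y : FreeGroup (P0Gen r)} (h : x * y⁻¹ ∈ P0RelsU r) :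
    PresentedGroup.mk (P0Rels r) x = PresentedGroup.mk (P0Rels r) y :=
  PresentedGroup.mk_eq_mk_of_mul_inv_mem (Or.inl (Or.inr h))

theorem mk_eq_mk_of_mem_P0RelsO {x y : FreeGroup (P0Gen r)} (h : x * y⁻¹ ∈ P0RelsO r) :
    PresentedGroup.mk (P0Rels r) x = PresentedGroup.mk (P0Rels r) y :=
  PresentedGroup.mk_eq_mk_of_mul_inv_mem (Or.inr h)

theorem o_add_two {k : ℕ} (hk : 1 ≤ k) (hkr : k + 2 ≤ r) (hpar : Even k ↔ Even r) :
    o r (k + 2) = o r 2 * (o r 1 * o r k * o r 1) * o r 2 := by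
  obtain rfl | hk : k = 1 ∨ 2 ≤ k := by omega
  · have hthree : o r 2 * o r 1 * o r 2 = o r 3 :=
      mk_eq_mk_of_mem_P0RelsO (mem_P0RelsO_iff.mpr (Or.inl ⟨by simpa using hpar, rfl⟩))
    rw [o_mul_self, one_mul, hthree]
  · have hfst : o r 1 * o r k * o r 1 = o r (k + 1) :=
      mk_eq_mk_of_mem_P0RelsO (mem_P0RelsO_iff.mpr (Or.inr ⟨k, hk, hkr, hpar, Or.inl rfl⟩))
    have hsnd : o r 2 * o r (k + 1) * o r 2 = o r (k + 2) :=
      mk_eq_mk_of_mem_P0RelsO (mem_P0RelsO_iff.mpr (Or.inr ⟨k, hk, hkr, hpar, Or.inr rfl⟩))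
    rw [hfst, hsnd]

theorem o_one_mul_o_succ :
    ∀ k : ℕ, k + 1 ≤ r → (Even (k + 1) ↔ Even r) → o r 1 * o r (k + 1) = (o r 1 * o r 2) ^ k
  | 0, _, _ => by rw [pow_zero, o_mul_self]
  | 1, _, _ => by rw [pow_one]
  | k + 2, hkr, hpar => by
    have hpar' : Even (k + 1) ↔ Even r := by simpa [parity_simps] using hpar
    have ih := o_one_mul_o_succ k (by omega) hpar'
    calc o r 1 * o r (k + 1 + 2)
        = o r 1 * o r 2 * (o r 1 * o r (k + 1)) * (o r 1 * o r 2) := by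
          rw [o_add_two (by omega) hkr hpar']
          simp only [mul_assoc]
      _ = (o r 1 * o r 2) ^ (k + 2) := by rw [ih, ← pow_succ', ← pow_succ]

theorem conj_o_one : u r 1 * u r 2 * o r 1 * (u r 1 * u r 2)⁻¹ = o r 1 * o r r * o r 1 := by
  have hthree : u r 2 * o r 1 * u r 2 = u r 3 := mk_eq_mk_of_mem_P0RelsU (by simp [P0RelsU])
  have hfive : u r 1 * u r 3 * u r 1 = u r 5 := mk_eq_mk_of_mem_P0RelsU (by simp [P0RelsU])
  have hlast : o r 1 * o r r * o r 1 = u r 5 := mk_eq_mk_of_mem_P0RelsU (by simp [P0RelsU])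
  rw [hlast, ← hfive, ← hthree, mul_inv_rev, inv_eq_of_mul_eq_one_left (u_mul_self 1),
    inv_eq_of_mul_eq_one_left (u_mul_self 2)]
  simp only [mul_assoc]

theorem conj_o_two : u r 1 * u r 2 * o r 2 * (u r 1 * u r 2)⁻¹ = o r 2 := by
  have hfour : u r 2 * o r 2 * u r 2 = u r 4 := mk_eq_mk_of_mem_P0RelsU (by simp [P0RelsU])
  have htwo : u r 1 * u r 4 * u r 1 = o r 2 := mk_eq_mk_of_mem_P0RelsU (by simp [P0RelsU])
  rw [mul_inv_rev, inv_eq_of_mul_eq_one_left (u_mul_self 1),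
    inv_eq_of_mul_eq_one_left (u_mul_self 2)]
  conv_rhs => rw [← htwo, ← hfour]
  simp only [mul_assoc]

theorem conj_o_one_mul_o_two (hr : 1 ≤ r) :
    u r 1 * u r 2 * (o r 1 * o r 2) * (u r 1 * u r 2)⁻¹ = (o r 1 * o r 2) ^ r := by
  obtain ⟨k, rfl⟩ := Nat.exists_eq_add_of_le' hr
  rw [← conj_mul, conj_o_one, conj_o_two, o_one_mul_o_succ k le_rfl Iff.rfl, mul_assoc, ← pow_succ]

end P0

section Reflections

variable {A : Type*} [AddCommGroup A]

/-- The point reflection `(x, y) ↦ (c - x, y)` of the first coordinate. -/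
def reflectFst (c : A) : Equiv.Perm (A × A) := (Equiv.subLeft c).prodCongr (Equiv.refl A)

/-- The point reflection `(x, y) ↦ (x, c - y)` of the second coordinate. -/
def reflectSnd (c : A) : Equiv.Perm (A × A) := (Equiv.refl A).prodCongr (Equiv.subLeft c)

/-- The exchange of coordinates twisted by an automorphism `e`, `(x, y) ↦ (e y, e⁻¹ x)`; the
twist is chosen so as to make it an involution. -/
def twistedSwap (e : A ≃+ A) : Equiv.Perm (A × A) :=
  (Equiv.prodComm A A).trans (e.toEquiv.prodCongr e.symm.toEquiv)

theorem reflectFst_apply (c : A) (p : A × A) : reflectFst c p = (c - p.1, p.2) := rfl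

theorem reflectSnd_apply (c : A) (p : A × A) : reflectSnd c p = (p.1, c - p.2) := rfl

theorem twistedSwap_apply (e : A ≃+ A) (p : A × A) : twistedSwap e p = (e p.2, e.symm p.1) := rfl

theorem reflectFst_mul_self (c : A) : reflectFst c * reflectFst c = 1 := by
  ext ⟨x, y⟩ <;> simp [reflectFst_apply]

theorem reflectSnd_mul_self (c : A) : reflectSnd c * reflectSnd c = 1 := by
  ext ⟨x, y⟩ <;> simp [reflectSnd_apply]

theorem twistedSwap_mul_self (e : A ≃+ A) : twistedSwap e * twistedSwap e = 1 := by
  ext ⟨x, y⟩ <;> simp [twistedSwap_apply]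

theorem reflectFst_conj_zsmul (a : A) (m n : ℤ) :
    reflectFst (m • a) * reflectFst (n • a) * reflectFst (m • a) =
      reflectFst ((2 * m - n) • a) := by
  ext ⟨x, y⟩
  · simp only [Equiv.Perm.mul_apply, reflectFst_apply]
    module
  · rfl

theorem twistedSwap_conj_reflectFst (e : A ≃+ A) (c : A) :
    twistedSwap e * reflectFst c * twistedSwap e = reflectSnd (e.symm c) := by
  ext ⟨x, y⟩ <;> simp [twistedSwap_apply, reflectFst_apply, reflectSnd_apply]

theorem twistedSwap_conj_reflectSnd (e : A ≃+ A) (c : A) :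
    twistedSwap e * reflectSnd c * twistedSwap e = reflectFst (e c) := by
  ext ⟨x, y⟩ <;> simp [twistedSwap_apply, reflectFst_apply, reflectSnd_apply]

theorem reflectFst_mul_reflectFst_pow_apply (c d : A) (n : ℕ) (p : A × A) :
    ((reflectFst c * reflectFst d) ^ n) p = (n • (c - d) + p.1, p.2) := by
  induction n with
  | zero => simp
  | succ n ih =>
    rw [pow_succ', Equiv.Perm.mul_apply, ih, Equiv.Perm.mul_apply, reflectFst_apply,
      reflectFst_apply]
    congr 1
    module

theorem not_isOfFinOrder_reflectFst_mul_reflectFst {c d : A} (h : ¬IsOfFinAddOrder (c - d)) :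
    ¬IsOfFinOrder (reflectFst c * reflectFst d) := by
  contrapose! h
  obtain ⟨n, hn, hpow⟩ := isOfFinOrder_iff_pow_eq_one.mp h
  refine isOfFinAddOrder_iff_nsmul_eq_zero.mpr ⟨n, hn, ?_⟩
  have happly := reflectFst_mul_reflectFst_pow_apply c d n 0
  rw [hpow] at happly
  simpa using (congrArg Prod.fst happly).symm

end Reflections

namespace P0

variable {A : Type*} [AddCommGroup A] {r : ℕ}

/-- The integer `c` such that `o_k` acts by `x ↦ c • a - x`. The values at `k = 1, 2` are a choice;
the relations of `𝒫₀` then force all others. -/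
def reflectionCenter (r k : ℕ) : ℤ := if k ≤ 2 ∨ (Even k ↔ Even r) then 2 - k else k - 1

theorem reflectionCenter_of_le_two {k : ℕ} (hk : k ≤ 2) : reflectionCenter r k = 2 - k :=
  if_pos (Or.inl hk)

theorem reflectionCenter_of_even_iff {k : ℕ} (hk : Even k ↔ Even r) :
    reflectionCenter r k = 2 - k :=
  if_pos (Or.inr hk)

theorem reflectionCenter_of_not_even_iff {k : ℕ} (hk2 : 2 < k) (hk : ¬(Even k ↔ Even r)) :
    reflectionCenter r k = k - 1 :=
  if_neg (not_or.mpr ⟨hk2.not_ge, hk⟩)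

/-- The action of the generators of `𝒫₀` on `A × A`, given `a : A` and an automorphism `e` of `A`
meant to satisfy `e a = r • a`. -/
def permOfGen (r : ℕ) (e : A ≃+ A) (a : A) : P0Gen r → Equiv.Perm (A × A)
  | .o i => reflectFst (reflectionCenter r (i + 1) • a)
  | .u i => ![twistedSwap e, twistedSwap (AddEquiv.refl A), reflectSnd a, reflectSnd 0,
      reflectFst (r • a)] i

theorem lift_permOfGen_oW (e : A ≃+ A) (a : A) {k : ℕ} (hk : 1 ≤ k) (hkr : k ≤ r) :
    FreeGroup.lift (permOfGen r e a) (oW r k) = reflectFst (reflectionCenter r k • a) := by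
  simp [oW, hk, hkr, permOfGen]

theorem lift_permOfGen_oW_of_even_iff (e : A ≃+ A) (a : A) {k : ℕ} (hk : 1 ≤ k) (hkr : k ≤ r)
    (hpar : Even k ↔ Even r) :
    FreeGroup.lift (permOfGen r e a) (oW r k) = reflectFst ((2 - k : ℤ) • a) := by
  rw [lift_permOfGen_oW e a hk hkr, reflectionCenter_of_even_iff hpar]

theorem lift_permOfGen_oW_one (e : A ≃+ A) (a : A) (hr : 1 ≤ r) :
    FreeGroup.lift (permOfGen r e a) (oW r 1) = reflectFst ((1 : ℤ) • a) :=
  lift_permOfGen_oW e a le_rfl hr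

theorem lift_permOfGen_oW_two (e : A ≃+ A) (a : A) (hr : 2 ≤ r) :
    FreeGroup.lift (permOfGen r e a) (oW r 2) = reflectFst ((0 : ℤ) • a) :=
  lift_permOfGen_oW e a one_le_two hr

theorem lift_permOfGen_uW (e : A ≃+ A) (a : A) (k : Fin 5) :
    FreeGroup.lift (permOfGen r e a) (uW r (k + 1)) = permOfGen r e a (.u k) := by
  simp [uW]

theorem permOfGen_mul_self (e : A ≃+ A) (a : A) (g : P0Gen r) :
    permOfGen r e a g * permOfGen r e a g = 1 := by
  rcases g with i | i
  · exact reflectFst_mul_self _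
  · fin_cases i
    exacts [twistedSwap_mul_self _, twistedSwap_mul_self _, reflectSnd_mul_self _,
      reflectSnd_mul_self _, reflectFst_mul_self _]

theorem lift_permOfGen_eq_one_of_mem_P0RelsU (hr : 2 ≤ r) {e : A ≃+ A} {a : A} (he : e a = r • a)
    {w : FreeGroup (P0Gen r)} (hw : w ∈ P0RelsU r) : FreeGroup.lift (permOfGen r e a) w = 1 := by
  have h_one := lift_permOfGen_oW_one e a (one_le_two.trans hr)
  have h_two := lift_permOfGen_oW_two e a hr
  have h_last := lift_permOfGen_oW_of_even_iff e a (one_le_two.trans hr) le_rfl Iff.rfl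
  have h_u1 : FreeGroup.lift (permOfGen r e a) (uW r 1) = twistedSwap e :=
    lift_permOfGen_uW e a 0
  have h_u2 : FreeGroup.lift (permOfGen r e a) (uW r 2) = twistedSwap (AddEquiv.refl A) :=
    lift_permOfGen_uW e a 1
  have h_u3 : FreeGroup.lift (permOfGen r e a) (uW r 3) = reflectSnd a := lift_permOfGen_uW e a 2
  have h_u4 : FreeGroup.lift (permOfGen r e a) (uW r 4) = reflectSnd 0 := lift_permOfGen_uW e a 3
  have h_u5 : FreeGroup.lift (permOfGen r e a) (uW r 5) = reflectFst (r • a) :=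
    lift_permOfGen_uW e a 4
  rcases hw with rfl | rfl | rfl | rfl | rfl <;>
    simp only [map_mul, map_inv, mul_inv_eq_one]
  · rw [h_u2, h_one, h_u3, twistedSwap_conj_reflectFst, one_zsmul, AddEquiv.refl_symm,
      AddEquiv.refl_apply]
  · rw [h_u2, h_two, h_u4, twistedSwap_conj_reflectFst, zero_zsmul, map_zero]
  · rw [h_u1, h_u3, h_u5, twistedSwap_conj_reflectSnd, he]
  · rw [h_u1, h_u4, h_two, twistedSwap_conj_reflectSnd, zero_zsmul, map_zero]
  · rw [h_one, h_last, h_u5, reflectFst_conj_zsmul, ← natCast_zsmul]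
    congr 2
    ring

theorem lift_permOfGen_eq_one_of_mem_P0RelsO (hr : 2 ≤ r) (e : A ≃+ A) (a : A)
    {w : FreeGroup (P0Gen r)} (hw : w ∈ P0RelsO r) : FreeGroup.lift (permOfGen r e a) w = 1 := by
  have h_one := lift_permOfGen_oW_one e a (one_le_two.trans hr)
  have h_two := lift_permOfGen_oW_two e a hr
  rcases mem_P0RelsO_iff.mp hw with ⟨hodd, rfl⟩ | ⟨k, hk, hkr, hpar, rfl | rfl⟩ <;>
    simp only [map_mul, map_inv, mul_inv_eq_one]
  · have hr3 : 3 ≤ r := by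
      rw [Nat.not_even_iff] at hodd
      omega
    rw [h_two, h_one, lift_permOfGen_oW_of_even_iff e a (by omega) hr3
      (iff_of_false (by decide) hodd),
      reflectFst_conj_zsmul]
    norm_num
  · have h_k := lift_permOfGen_oW_of_even_iff e a (by omega) (by omega) hpar
    rw [h_one, h_k, lift_permOfGen_oW e a (by omega) (by omega),
      reflectionCenter_of_not_even_iff (by omega) (by rw [Nat.even_add_one]; tauto),
      reflectFst_conj_zsmul]
    congr 2
    push_cast
    ring
  · rw [h_two, lift_permOfGen_oW e a (by omega) (by omega),
      reflectionCenter_of_not_even_iff (by omega) (by rw [Nat.even_add_one]; tauto),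
      lift_permOfGen_oW_of_even_iff e a (by omega) hkr (by simpa [parity_simps] using hpar),
      reflectFst_conj_zsmul]
    congr 2
    push_cast
    ring

/-- The action of `𝒫₀` on `A × A` attached to `a : A` and an automorphism `e` of `A` that
multiplies `a` by `r`. -/
def toPerm (hr : 2 ≤ r) (e : A ≃+ A) (a : A) (he : e a = r • a) : P0 r →* Equiv.Perm (A × A) :=
  PresentedGroup.toGroup (f := permOfGen r e a) <| by
    rintro w ((⟨g, rfl⟩ | hw) | hw)
    · simpa using permOfGen_mul_self e a g
    · exact lift_permOfGen_eq_one_of_mem_P0RelsU hr he hw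
    · exact lift_permOfGen_eq_one_of_mem_P0RelsO hr e a hw

theorem toPerm_o_one_mul_o_two (hr : 2 ≤ r) (e : A ≃+ A) (a : A) (he : e a = r • a) :
    toPerm hr e a he (o r 1 * o r 2) = reflectFst a * reflectFst 0 := by
  have h_one := lift_permOfGen_oW_one e a (one_le_two.trans hr)
  have h_two := lift_permOfGen_oW_two e a hr
  rw [one_zsmul] at h_one
  rw [zero_zsmul] at h_two
  exact (map_mul _ _ _).trans (congrArg₂ _ h_one h_two)

theorem not_isOfFinOrder_o_one_mul_o_two (hr : 2 ≤ r) : ¬IsOfFinOrder (o r 1 * o r 2) := by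
  have hr0 : (r : ℚ) ≠ 0 := by positivity
  let ρ := toPerm hr (DistribMulAction.toAddEquiv₀ ℚ (r : ℚ) hr0) 1
    (by simp [DistribMulAction.toAddEquiv₀])
  intro hfin
  have himage : IsOfFinOrder (reflectFst (1 : ℚ) * reflectFst 0) := by
    simpa only [ρ, toPerm_o_one_mul_o_two] using ρ.isOfFinOrder hfin
  refine not_isOfFinOrder_reflectFst_mul_reflectFst ?_ himage
  exact not_isOfFinAddOrder_of_isAddTorsionFree (by norm_num)

end P0

/-- The group `𝒫 = ⟨u, o | u o u⁻¹ = o^r⟩` embeds into `𝒫₀`: there is an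
injective group homomorphism `φ : 𝒫 → 𝒫₀` with `φ(u) = u₁u₂` and `φ(o) = o₁o₂`. -/
theorem stmt_3 (r : ℕ) (hr : 2 ≤ r) :
    ∃ φ : Pgrp r →* P0 r, Function.Injective φ ∧
      φ (PresentedGroup.of PGen.u) = PresentedGroup.mk (P0Rels r) (uW r 1 * uW r 2) ∧
      φ (PresentedGroup.of PGen.o) = PresentedGroup.mk (P0Rels r) (oW r 1 * oW r 2) := by
  have hrel := P0.conj_o_one_mul_o_two (one_le_two.trans hr)
  exact ⟨Pgrp.lift _ _ hrel, Pgrp.lift_injective hr hrel (P0.not_isOfFinOrder_o_one_mul_o_two hr),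
    Pgrp.lift_of_u _ _ hrel, Pgrp.lift_of_o _ _ hrel⟩
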